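/- arXiv:2601.13855 — 2 statements merged into one kernel-verified Lean document; each statement's English description precedes it below -/
import Mathlib

section
/- Let N₁ : ℝ → ℝ satisfy N₁(G) ≥ 2 for all large G and ∫₂^{N₁(G)} (−P(t)) dt = a·G + O(1) as G → ∞. Let g : ℝ → ℝ satisfy (i) g(T) − T ∼ (1−c)·T/ln T as T → ∞, and (ii) for every fixed l > 0, ∫_{g(T)}^{g(T+2l)} |ζ(1/2+it)|² dt = (1+o(1))·2l·ln T as T → ∞. Then for every fixed l > 0, the product [∫_{N₁(T)}^{N₁(g(T))} (−P(t)) dt] · [∫_{g(T)}^{g(T+2l)} |ζ(1/2+it)|² dt] = (1+o(1))·2l·a·(1−c)·T as T → ∞. -/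
/-!
Write `I(G) = ∫_2^{N₁ G} (-P) = a G + O(1)`. Since `c < 1` (indeed `c < 2/3`), hypothesis (i) makes
`g T - T`, hence `g T`, tend to infinity, so the hypothesis on `I` applies at `g T` too and
`∫_{N₁ T}^{N₁ (g T)} (-P) = I(g T) - I(T) = a (g T - T) + O(1) ∼ a (1 - c) T / log T`, the bounded
error being negligible against `T / log T → ∞`. Multiplying by `(1 + o(1)) 2 l log T` cancels the
logarithm. Splitting the integral at `2` requires `P` to be integrable on `[2, b]`, which is
`intervalIntegrable_neg_P`.
-/

open Filter Real Asymptotics MeasureTheory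

noncomputable def pichar (t : ℝ) : ℝ := (Nat.primeCounting ⌊t⌋₊ : ℝ)

noncomputable def P (t : ℝ) : ℝ := pichar t - ∫ u in (2:ℝ)..t, 1 / Real.log u

noncomputable def a : ℝ := Real.exp 4.5

noncomputable def c : ℝ := Real.eulerMascheroniConstant

noncomputable def Z (t : ℝ) : ℝ := ‖riemannZeta (1/2 + (t : ℂ) * Complex.I)‖ ^ 2

/-- On `[2, b]`, `P` is the difference of a monotone function and a continuous one. -/
lemma intervalIntegrable_neg_P {b : ℝ} (hb : 2 ≤ b) :
    IntervalIntegrable (fun t => -P t) volume 2 b := by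
  have hpi : Monotone pichar := fun x y h =>
    Nat.cast_le.2 (Nat.monotone_primeCounting (Nat.floor_mono h))
  have hlog : ContinuousOn (fun u : ℝ => 1 / Real.log u) (Set.uIcc 2 b) := by
    rw [Set.uIcc_of_le hb]
    refine continuousOn_const.div (Real.continuousOn_log.mono fun u hu => ?_) fun u hu => ?_
    · have : (2 : ℝ) ≤ u := hu.1
      simp only [Set.mem_compl_iff, Set.mem_singleton_iff]
      linarith
    · exact (Real.log_pos (by linarith [hu.1])).ne'
  have hli : ContinuousOn (fun t => ∫ u in (2:ℝ)..t, 1 / Real.log u) (Set.uIcc 2 b) :=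
    intervalIntegral.continuousOn_primitive_interval (hlog.integrableOn_compact isCompact_uIcc)
  exact (hpi.intervalIntegrable.sub hli.intervalIntegrable).neg

/-- The basic product formula (3.13): for every fixed `l > 0`,
`[∫_{N₁ T}^{N₁(g T)} (-P)] · [∫_{g T}^{g(T+2l)} |ζ(1/2+it)|²] = (1+o(1))·2l·a·(1-c)·T`. -/
theorem stmt_6 (N₁ : ℝ → ℝ)
    (hN2 : ∀ᶠ G in atTop, 2 ≤ N₁ G)
    (hN : (fun G => (∫ t in (2:ℝ)..N₁ G, -P t) - a * G) =O[atTop] (fun _ => (1:ℝ)))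
    (g : ℝ → ℝ)
    (hg1 : (fun T => g T - T) ~[atTop] (fun T => (1 - c) * T / Real.log T))
    (hg2 : ∀ l : ℝ, 0 < l →
      (fun T => ∫ t in g T..g (T + 2 * l), Z t) ~[atTop] (fun T => 2 * l * Real.log T))
    (l : ℝ) (hl : 0 < l) :
    (fun T => (∫ t in N₁ T..N₁ (g T), -P t) * ∫ t in g T..g (T + 2 * l), Z t)
      ~[atTop] (fun T => 2 * l * a * (1 - c) * T) := by
  have hc : 0 < 1 - c := by
    have := Real.eulerMascheroniConstant_lt_two_thirds
    unfold c; linarith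
  have ha : a ≠ 0 := (Real.exp_pos _).ne'
  have hm : Tendsto (fun T : ℝ => (1 - c) * T / Real.log T) atTop atTop := by
    have hlog : Tendsto (fun T : ℝ => (Real.log T / T)⁻¹) atTop atTop := by
      refine (tendsto_nhdsWithin_iff.2
        ⟨isLittleO_log_id_atTop.tendsto_div_nhds_zero, ?_⟩).inv_tendsto_nhdsGT_zero
      filter_upwards [eventually_gt_atTop 1] with T hT
      exact div_pos (Real.log_pos hT) (zero_lt_one.trans hT)
    simpa only [mul_div_assoc, inv_div] using hlog.const_mul_atTop hc
  have hd : Tendsto (fun T => g T - T) atTop atTop := hg1.symm.tendsto_atTop hm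
  have hg : Tendsto g atTop atTop := by
    simpa using hd.atTop_add_atTop tendsto_id
  -- The two `O(1)` errors, at `g T` and at `T`, remain bounded after subtraction.
  have hO := (hN.comp_tendsto hg).sub hN
  have hJ : (fun T => ∫ t in N₁ T..N₁ (g T), -P t)
      ~[atTop] (fun T => a * ((1 - c) * T / Real.log T)) := by
    have hag : (fun T => a * (g T - T)) ~[atTop] (fun T => a * ((1 - c) * T / Real.log T)) :=
      (IsEquivalent.refl (u := fun _ : ℝ => a)).mul hg1
    have hsmall : (fun _ : ℝ => (1 : ℝ)) =o[atTop] (fun T => a * ((1 - c) * T / Real.log T)) :=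
      (isLittleO_const_left.2 (Or.inr (tendsto_norm_atTop_atTop.comp hm))).trans_isBigO
        (isBigO_self_const_mul ha _ _)
    refine (hag.add_isLittleO (hO.trans_isLittleO hsmall)).congr_left ?_
    filter_upwards [hN2, hg.eventually hN2] with T h1 h2
    have := intervalIntegral.integral_interval_sub_left
      (intervalIntegrable_neg_P h2) (intervalIntegrable_neg_P h1)
    simp only [Pi.add_apply, Function.comp_apply]
    linarith
  refine (hJ.mul (hg2 l hl)).congr_right ?_
  filter_upwards [eventually_gt_atTop 1] with T hT
  have := (Real.log_pos hT).ne'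
  simp only [Pi.mul_apply]
  field_simp
end

section
/- Let N₁ : ℝ → ℝ satisfy N₁(G) ≥ 2 for all large G and ∫₂^{N₁(G)} (−P(t)) dt = a·G + O(1) as G → ∞. Let g : ℝ → ℝ satisfy g(T) − T ∼ (1−c)·T/ln T as T → ∞, and assume the prime number theorem in the form π(τ) ∼ τ/ln τ as τ → ∞. Then ∫_{N₁(τ/(a(1−c)))}^{N₁(g(τ/(a(1−c))))} (−P(t)) dt ∼ π(τ) as τ → ∞; that is, this parametric family of increments of Ingham's integral realizes an asymptotic mapping of −P(t) onto the prime-counting function π(t). -/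
/-!
Write `K = a (1 - c) > 0` and `T = τ / K`. By additivity of the integral, the increment equals
`∫₂^{N₁(g T)} (-P) - ∫₂^{N₁ T} (-P) = a (g T - T) + O(1)`, where the hypothesis on `N₁` may be used
at `g T` because `g T → ∞`. Now `a (g T - T) ∼ K T / log T = τ / log (τ / K) ∼ τ / log τ ∼ π(τ)`,
and the `O(1)` is negligible since `τ / log τ → ∞`.

Additivity needs `P` to be integrable on `[2, x]`: it is a monotone function minus the primitive
of a continuous one (`P_intervalIntegrable`).
-/

open Filter Real Asymptotics MeasureTheory

lemma pichar_mono : Monotone pichar := fun _ _ h => by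
  unfold pichar
  exact_mod_cast Nat.monotone_primeCounting (Nat.floor_mono h)

lemma P_intervalIntegrable {x : ℝ} (hx : 2 ≤ x) : IntervalIntegrable P volume 2 x := by
  have hlog : ContinuousOn (fun u : ℝ => 1 / Real.log u) (Set.uIcc 2 x) := by
    rw [Set.uIcc_of_le hx]
    intro u hu
    have hu2 : (2 : ℝ) ≤ u := hu.1
    have h0 : Real.log u ≠ 0 := (Real.log_pos (by linarith)).ne'
    have h1 : u ≠ 0 := by linarith
    exact (continuousAt_const.div (Real.continuousAt_log h1) h0).continuousWithinAt
  have hprim : IntervalIntegrable (fun t => ∫ u in (2:ℝ)..t, 1 / Real.log u) volume 2 x :=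
    (intervalIntegral.continuousOn_primitive_interval
      (hlog.integrableOn_compact isCompact_uIcc)).intervalIntegrable
  exact (pichar_mono.intervalIntegrable).sub hprim

lemma tendsto_div_log : Tendsto (fun x : ℝ => x / Real.log x) atTop atTop := by
  have h : Tendsto (fun x : ℝ => Real.log x / x) atTop (nhdsWithin 0 (Set.Ioi 0)) := by
    refine tendsto_nhdsWithin_iff.2 ⟨Real.isLittleO_log_id_atTop.tendsto_div_nhds_zero, ?_⟩
    filter_upwards [eventually_gt_atTop 1] with x hx
    exact div_pos (Real.log_pos hx) (by linarith)
  simpa [Function.comp_def] using tendsto_inv_nhdsGT_zero.comp h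

/-- Rescaling the argument does not affect the logarithm asymptotically. -/
lemma log_div_isEquivalent {K : ℝ} (hK : 0 < K) :
    (fun τ : ℝ => Real.log (τ / K)) ~[atTop] Real.log := by
  have h : (fun _ : ℝ => -Real.log K) =o[atTop] Real.log :=
    Real.isLittleO_const_log_atTop
  refine (IsEquivalent.refl.add_isLittleO h).congr_left ?_
  filter_upwards [eventually_gt_atTop 0] with τ hτ
  simp [Real.log_div hτ.ne' hK.ne', sub_eq_add_neg]

/-- Theorem 4: the asymptotic mapping `-P(t) → π(t)`:
`∫_{N₁(τ/(a(1-c)))}^{N₁(g(τ/(a(1-c))))} (-P) ∼ π(τ)`. -/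
theorem stmt_11 (N₁ : ℝ → ℝ)
    (hN2 : ∀ᶠ G in atTop, 2 ≤ N₁ G)
    (hN : (fun G => (∫ t in (2:ℝ)..N₁ G, -P t) - a * G) =O[atTop] (fun _ => (1:ℝ)))
    (g : ℝ → ℝ)
    (hg1 : (fun T => g T - T) ~[atTop] (fun T => (1 - c) * T / Real.log T))
    (hPNT : (fun τ => pichar τ) ~[atTop] (fun τ => τ / Real.log τ)) :
    (fun τ => ∫ t in N₁ (τ / (a * (1 - c)))..N₁ (g (τ / (a * (1 - c)))), -P t)
      ~[atTop] (fun τ => pichar τ) := by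
  have ha : 0 < a := Real.exp_pos _
  have hc : 0 < 1 - c := by
    have := Real.eulerMascheroniConstant_lt_two_thirds
    unfold c; linarith
  have hK : 0 < a * (1 - c) := mul_pos ha hc
  have hT : Tendsto (fun τ : ℝ => τ / (a * (1 - c))) atTop atTop :=
    tendsto_id.atTop_div_const hK
  have hgT : Tendsto g atTop atTop := by
    have h1 : Tendsto (fun T : ℝ => (1 - c) * T / Real.log T) atTop atTop := by
      simpa [mul_div_assoc] using tendsto_div_log.const_mul_atTop hc
    simpa using (hg1.symm.tendsto_atTop h1).atTop_add_atTop tendsto_id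
  have hgTτ := hgT.comp hT
  have hmain : (fun τ => a * (g (τ / (a * (1 - c))) - τ / (a * (1 - c))))
      ~[atTop] (fun τ => τ / Real.log τ) := by
    have h1 := (IsEquivalent.refl (u := fun _ : ℝ => a) (l := atTop)).mul (hg1.comp_tendsto hT)
    have h2 := (IsEquivalent.refl (u := fun τ : ℝ => τ) (l := atTop)).div
      (log_div_isEquivalent hK)
    refine IsEquivalent.trans (h1.congr_right ?_) h2
    refine Eventually.of_forall fun τ => ?_
    simp only [Pi.mul_apply, Function.comp_apply, Pi.div_apply]
    rw [← mul_div_assoc]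
    congr 1
    field_simp
  have herr : (fun τ =>
      ((∫ t in (2:ℝ)..N₁ (g (τ / (a * (1 - c)))), -P t) - a * g (τ / (a * (1 - c))))
      - ((∫ t in (2:ℝ)..N₁ (τ / (a * (1 - c))), -P t) - a * (τ / (a * (1 - c)))))
      =o[atTop] (fun τ : ℝ => τ / Real.log τ) := by
    have h1 : _ =O[atTop] (fun _ : ℝ => (1:ℝ)) := hN.comp_tendsto hgTτ
    have h2 : _ =O[atTop] (fun _ : ℝ => (1:ℝ)) := hN.comp_tendsto hT
    refine (h1.sub h2).trans_isLittleO ?_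
    exact isLittleO_const_left.2 (Or.inr (tendsto_norm_atTop_atTop.comp tendsto_div_log))
  refine IsEquivalent.trans ((hmain.add_isLittleO herr).congr_left ?_) hPNT.symm
  filter_upwards [hT.eventually hN2, hgTτ.eventually hN2] with τ h1 h2
  have := intervalIntegral.integral_interval_sub_left
    (P_intervalIntegrable h2).neg (P_intervalIntegrable h1).neg
  simp only [Pi.neg_apply, Function.comp_apply] at this
  simp only [Pi.add_apply]
  rw [← this]
  ring
end
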